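/- There is no minor-preserving map from Pol({0,1,2}; C_3, R^=_2) to Pol({0,1,2}; C_3, R^=_3). -/

import Mathlib

/-- The three-element domain `{0,1,2}`. -/
abbrev D3 : Type := Fin 3

/-- `n`-ary operations on `{0,1,2}`. -/
abbrev Op (n : ℕ) : Type := (Fin n → D3) → D3

/-- An `n`-ary operation `f` preserves a `k`-ary relation `R`. -/
def Preserves {n k : ℕ} (f : Op n) (R : Set (Fin k → D3)) : Prop :=
  ∀ t : Fin n → (Fin k → D3), (∀ i, t i ∈ R) → (fun j => f fun i => t i j) ∈ R

/-- `C₃ = {(0,1),(1,2),(2,0)}`. -/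
def C3rel : Set (Fin 2 → D3) :=
  { t | (t 0 = 0 ∧ t 1 = 1) ∨ (t 0 = 1 ∧ t 1 = 2) ∨ (t 0 = 2 ∧ t 1 = 0) }

/-- `R⁼₂ = {(x,y,z) : x ∈ {0,1} ∧ (x = 0 → y = z ∈ {0,1})}`. -/
def Req2rel : Set (Fin 3 → D3) :=
  { t | (t 0 = 0 ∨ t 0 = 1) ∧ (t 0 = 0 → t 1 = t 2 ∧ (t 1 = 0 ∨ t 1 = 1)) }

/-- `R⁼₃ = {(x,y,z) : x ∈ {0,1} ∧ (x = 0 → y = z)}`. -/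
def Req3rel : Set (Fin 3 → D3) :=
  { t | (t 0 = 0 ∨ t 0 = 1) ∧ (t 0 = 0 → t 1 = t 2) }

/-- The polymorphism clone of a family of relations on `{0,1,2}`. -/
def Pol (A : Set (Σ k : ℕ, Set (Fin k → D3))) : ∀ n, Set (Op n) :=
  fun n => { f | ∀ R ∈ A, Preserves f R.2 }

/-- The minor `f_π` of an `n`-ary operation `f` along `π`. -/
def minor {n r : ℕ} (f : Op n) (π : Fin n → Fin r) : Op r :=
  fun x => f fun i => x (π i)

/-- `ξ` is a minor-preserving map from `C` to `D`. -/
def IsMinorHom (C D : ∀ n, Set (Op n)) (ξ : ∀ n, Op n → Op n) : Prop :=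
  (∀ n, ∀ f ∈ C n, ξ n f ∈ D n) ∧
  (∀ (n r : ℕ) (f : Op n) (π : Fin n → Fin r), f ∈ C n → ξ r (minor f π) = minor (ξ n f) π)

/-!
Minor-preserving maps transport minor identities, so it suffices to find identities that are
satisfied by an operation on the source side and by none on the target side. Consider, for a
4-ary `f`,
`f(x,y,z,t) = f(y,z,x,t)` and `f(x,x,x,t) = f(x,x,x,x)`.

They hold for the operation that returns `t` when `x, y, z` are pairwise distinct and the
rock-paper-scissors winner of `x, y, z` otherwise. On `{0,1}` the winner is the maximum, so the
operation preserves `R⁼₂`, whose last two entries are confined to `{0,1}` as soon as they matter.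

Let `g` preserve `C₃` and `R⁼₃`. Then `g(0,0,0,0) = 0`, hence `g(0,0,0,1) = 0`, and by `R⁼₃` the
operation `g` ignores its last argument everywhere. Cyclicity and invariance under `C₃` now give
`g(0,1,2,0) = g(1,2,0,0) = g(1,2,0,1) = g(0,1,2,0) + 1`, which is absurd.
-/

section Relations

variable {n : ℕ} {f : Op n}

lemma mem_C3rel_iff {t : Fin 2 → D3} : t ∈ C3rel ↔ t 1 = t 0 + 1 := by
  simp only [C3rel, Set.mem_ofPred_eq]
  generalize t 0 = a, t 1 = b
  revert a b
  decide

lemma eq_zero_or_eq_one_iff_le_one : ∀ a : D3, a = 0 ∨ a = 1 ↔ a ≤ 1 := by decide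

lemma mem_Req2rel_iff {t : Fin 3 → D3} :
    t ∈ Req2rel ↔ t 0 ≤ 1 ∧ (t 0 = 0 → t 1 = t 2 ∧ t 1 ≤ 1) := by
  simp only [Req2rel, Set.mem_ofPred_eq, eq_zero_or_eq_one_iff_le_one]

lemma mem_Req3rel_iff {t : Fin 3 → D3} :
    t ∈ Req3rel ↔ t 0 ≤ 1 ∧ (t 0 = 0 → t 1 = t 2) := by
  simp only [Req3rel, Set.mem_ofPred_eq, eq_zero_or_eq_one_iff_le_one]

lemma mem_Pol_pair_iff {k l : ℕ} {R : Set (Fin k → D3)} {S : Set (Fin l → D3)} :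
    f ∈ Pol {⟨k, R⟩, ⟨l, S⟩} n ↔ Preserves f R ∧ Preserves f S := by
  simp [Pol]

lemma preserves_C3rel_iff : Preserves f C3rel ↔ ∀ x, f (x + 1) = f x + 1 := by
  constructor
  · intro hf x
    exact mem_C3rel_iff.1 (hf (fun i => ![x i, x i + 1]) fun i => mem_C3rel_iff.2 rfl)
  · intro hf t ht
    have h_succ : (fun i => t i 1) = (fun i => t i 0) + 1 :=
      funext fun i => mem_C3rel_iff.1 (ht i)
    exact mem_C3rel_iff.2 ((congrArg f h_succ).trans (hf _))

lemma Preserves.apply_le_one_of_le_one (hf : Preserves f Req3rel) {s : Fin n → D3} (hs : s ≤ 1) :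
    f s ≤ 1 :=
  (mem_Req3rel_iff.1 (hf (fun i _ => s i) fun i => mem_Req3rel_iff.2 ⟨hs i, fun _ => rfl⟩)).1

lemma Preserves.apply_eq_of_eq_on_zeros (hf : Preserves f Req3rel) {s x y : Fin n → D3}
    (hs : s ≤ 1) (h_zero : f s = 0) (hxy : ∀ i, s i = 0 → x i = y i) : f x = f y :=
  (mem_Req3rel_iff.1 (hf (fun i => ![s i, x i, y i])
    fun i => mem_Req3rel_iff.2 ⟨hs i, hxy i⟩)).2 h_zero

lemma Preserves.apply_zero (hC : Preserves f C3rel) (hR : Preserves f Req3rel) : f 0 = 0 := by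
  have h_zero : f 0 ≤ 1 := hR.apply_le_one_of_le_one fun _ => Fin.zero_le _
  have h_one : f 0 + 1 ≤ 1 := by
    rw [← preserves_C3rel_iff.1 hC, zero_add]
    exact hR.apply_le_one_of_le_one le_rfl
  generalize f 0 = a at h_zero h_one
  revert a
  decide

end Relations

lemma IsMinorHom.minor_eq_minor {C D : ∀ n, Set (Op n)} {ξ : ∀ n, Op n → Op n}
    (hξ : IsMinorHom C D ξ) {m n r : ℕ} {f : Op m} {g : Op n} (hf : f ∈ C m) (hg : g ∈ C n)
    {π : Fin m → Fin r} {ρ : Fin n → Fin r} (h : minor f π = minor g ρ) :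
    minor (ξ m f) π = minor (ξ n g) ρ := by
  rw [← hξ.2 m r f π hf, h, hξ.2 n r g ρ hg]

/-- The minor identities `f(x,y,z,t) = f(y,z,x,t)` and `f(x,x,x,t) = f(x,x,x,x)`: `f` is a cyclic
ternary operation with a parameter `t` that is ignored on the diagonal. The first identity is
written with `minor f id` in place of `f` so that both sides are minors. -/
structure IsParametricCyclic (f : Op 4) : Prop where
  cyclic : minor f id = minor f ![1, 2, 0, 3]
  diagonal : minor f (![0, 0, 0, 1] : Fin 4 → Fin 2) = minor f ![0, 0, 0, 0]

lemma IsMinorHom.isParametricCyclic {C D : ∀ n, Set (Op n)} {ξ : ∀ n, Op n → Op n}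
    (hξ : IsMinorHom C D ξ) {f : Op 4} (hf : f ∈ C 4) (h : IsParametricCyclic f) :
    IsParametricCyclic (ξ 4 f) :=
  ⟨hξ.minor_eq_minor hf hf h.cyclic, hξ.minor_eq_minor hf hf h.diagonal⟩

namespace IsParametricCyclic

variable {f : Op 4}

lemma apply_rotate (h : IsParametricCyclic f) (a b c d : D3) :
    f ![a, b, c, d] = f ![b, c, a, d] := by
  calc f ![a, b, c, d] = minor f ![1, 2, 0, 3] ![a, b, c, d] := congrFun h.cyclic _
    _ = f ![b, c, a, d] := congrArg f (by decide +revert)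

lemma apply_diagonal (h : IsParametricCyclic f) (a b : D3) :
    f ![a, a, a, b] = f ![a, a, a, a] := by
  calc f ![a, a, a, b] = minor f (![0, 0, 0, 1] : Fin 4 → Fin 2) ![a, b] :=
        congrArg f (by decide +revert)
    _ = minor f ![0, 0, 0, 0] ![a, b] := congrFun h.diagonal _
    _ = f ![a, a, a, a] := congrArg f (by decide +revert)

lemma not_preserves_Req3rel (h : IsParametricCyclic f) (hC : Preserves f C3rel) :
    ¬ Preserves f Req3rel := by
  intro hR
  have h_zero : f ![0, 0, 0, 1] = 0 :=
    calc f ![0, 0, 0, 1] = f ![0, 0, 0, 0] := h.apply_diagonal 0 1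
      _ = f 0 := congrArg f (by decide)
      _ = 0 := hC.apply_zero hR
  have h_last : f ![1, 2, 0, 0] = f ![1, 2, 0, 1] :=
    hR.apply_eq_of_eq_on_zeros (Pi.le_def.2 (by decide)) h_zero (by decide)
  have h_fixed : f ![0, 1, 2, 0] = f ![0, 1, 2, 0] + 1 :=
    calc f ![0, 1, 2, 0] = f ![1, 2, 0, 0] := h.apply_rotate 0 1 2 0
      _ = f ![1, 2, 0, 1] := h_last
      _ = f (![0, 1, 2, 0] + 1) := congrArg f (by decide)
      _ = f ![0, 1, 2, 0] + 1 := preserves_C3rel_iff.1 hC _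
  exact absurd h_fixed (by simp)

end IsParametricCyclic

/-- The rock-paper-scissors operation on `{0,1,2}`, in which `x + 1` beats `x`. -/
def rps (x y : D3) : D3 := if y = x + 1 then y else x

lemma rps_add_one : ∀ x y : D3, rps (x + 1) (y + 1) = rps x y + 1 := by decide

lemma rps_eq_max : ∀ {x y : D3}, x ≤ 1 → y ≤ 1 → rps x y = max x y := by decide

lemma not_pairwise_ne_of_le_one :
    ∀ {x y z : D3}, x ≤ 1 → y ≤ 1 → z ≤ 1 → ¬ (x ≠ y ∧ y ≠ z ∧ x ≠ z) := by decide

/-- The 4-ary operation returning its last argument if the first three are pairwise distinct, and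
the rock-paper-scissors winner of the first three otherwise. It is the witness on the `R⁼₂` side
for `IsParametricCyclic`. -/
def tiebreakRps : Op 4 := fun x =>
  if x 0 ≠ x 1 ∧ x 1 ≠ x 2 ∧ x 0 ≠ x 2 then x 3 else rps (rps (x 0) (x 1)) (x 2)

namespace tiebreakRps

lemma isParametricCyclic : IsParametricCyclic tiebreakRps where
  cyclic := by
    funext x
    decide +revert
  diagonal := by
    funext x
    simp [minor, tiebreakRps, rps]

lemma preserves_C3rel : Preserves tiebreakRps C3rel := by
  refine preserves_C3rel_iff.2 fun x => ?_
  simp only [tiebreakRps, Pi.add_apply, Pi.one_apply, rps_add_one, ne_eq, add_left_inj]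
  split_ifs <;> rfl

lemma apply_eq_max {x : Fin 4 → D3} (h₀ : x 0 ≤ 1) (h₁ : x 1 ≤ 1) (h₂ : x 2 ≤ 1) :
    tiebreakRps x = max (max (x 0) (x 1)) (x 2) := by
  rw [tiebreakRps, if_neg (not_pairwise_ne_of_le_one h₀ h₁ h₂), rps_eq_max h₀ h₁,
    rps_eq_max (max_le h₀ h₁) h₂]

lemma preserves_Req2rel : Preserves tiebreakRps Req2rel := by
  intro t ht
  simp only [mem_Req2rel_iff] at ht ⊢
  rw [apply_eq_max (ht 0).1 (ht 1).1 (ht 2).1]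
  refine ⟨max_le (max_le (ht 0).1 (ht 1).1) (ht 2).1, fun h_max => ?_⟩
  obtain ⟨⟨h₀, h₁⟩, h₂⟩ : (t 0 0 = 0 ∧ t 1 0 = 0) ∧ t 2 0 = 0 := by
    simpa only [max_le_iff, Fin.le_zero_iff] using h_max.le
  obtain ⟨eq₀, le₀⟩ := (ht 0).2 h₀
  obtain ⟨eq₁, le₁⟩ := (ht 1).2 h₁
  obtain ⟨eq₂, le₂⟩ := (ht 2).2 h₂
  rw [apply_eq_max le₀ le₁ le₂,
    apply_eq_max (eq₀ ▸ le₀) (eq₁ ▸ le₁) (eq₂ ▸ le₂), eq₀, eq₁, eq₂]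
  exact ⟨rfl, max_le (max_le (eq₀ ▸ le₀) (eq₁ ▸ le₁)) (eq₂ ▸ le₂)⟩

end tiebreakRps

/-- There is no minor-preserving map from `Pol({0,1,2}; C₃, R⁼₂)` to
`Pol({0,1,2}; C₃, R⁼₃)`. -/
theorem stmt14 :
    ¬ ∃ ξ, IsMinorHom
      (Pol ({⟨2, C3rel⟩, ⟨3, Req2rel⟩} : Set (Σ k : ℕ, Set (Fin k → D3))))
      (Pol ({⟨2, C3rel⟩, ⟨3, Req3rel⟩} : Set (Σ k : ℕ, Set (Fin k → D3)))) ξ := by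
  rintro ⟨ξ, hξ⟩
  have h_source := mem_Pol_pair_iff.2
    ⟨tiebreakRps.preserves_C3rel, tiebreakRps.preserves_Req2rel⟩
  have h_cyclic : IsParametricCyclic (ξ 4 tiebreakRps) :=
    hξ.isParametricCyclic h_source tiebreakRps.isParametricCyclic
  obtain ⟨hC, hR⟩ := mem_Pol_pair_iff.1 (hξ.1 4 tiebreakRps h_source)
  exact h_cyclic.not_preserves_Req3rel hC hR
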